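/- arXiv:2207.11852 — 4 statements merged into one kernel-verified Lean document; each statement's English description precedes it below -/
import Mathlib

section
/- Let (G,X) be a flow with G compactly generated. Then the orbit closure mapping x ↦ closure(G•x) is ⌜continuous⌝ if and only if it is upper semicontinuous. -/
open Pointwise Filter Topology

/-- A directed (preordered, nonempty) index relation for nets. -/
def DirIdx {ι : Type} (le : ι → ι → Prop) : Prop :=
  Nonempty ι ∧ (∀ i, le i i) ∧ (∀ i j k, le i j → le j k → le i k) ∧
    ∀ i j, ∃ k, le i k ∧ le j k

/-- The limsup of a net of subsets of a topological space. -/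
def NetLimsup {ι α : Type} [TopologicalSpace α] (le : ι → ι → Prop) (Y : ι → Set α) :
    Set α :=
  {y | ∀ U ∈ 𝓝 y, ∀ i, ∃ j, le i j ∧ (U ∩ Y j).Nonempty}

/-!
For the orbit closure map, ⌜continuity⌝ says only that its graph is closed: the inclusion
`closure (G • x) ⊆ limsup` holds for every action by continuous maps, and the reverse inclusion is
closedness of the graph. An upper semicontinuous map with closed values in a regular space has a
closed graph. Conversely, let the graph be closed and choose a compact neighbourhood `L` of
`closure (G • x)` inside the given open set. The compact shell `Γ • L \ interior L` misses
`closure (G • x)`, hence also `closure (G • y)` for all `y` near `x`. Since an orbit advances by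
elements of `Γ`, it cannot leave `interior L` without landing in the shell, so `G • y ⊆ L`.
-/

section ClosedGraph

/-- The graph `{(x, y) | y ∈ F x}` of the correspondence `F` is closed: the counterpart of
`HasOpenCGraph`, and the net-free form of ⌜continuity⌝ of the orbit closure map. -/
def HasClosedCGraph {α β : Type*} [TopologicalSpace α] [TopologicalSpace β]
    (F : α → Set β) : Prop :=
  IsClosed {p : α × β | p.2 ∈ F p.1}

variable {α β : Type*} [TopologicalSpace α] [TopologicalSpace β] {F : α → Set β}

theorem HasClosedCGraph.eventually_disjoint (hF : HasClosedCGraph F) {x : α} {C : Set β}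
    (hC : IsCompact C) (hxC : Disjoint (F x) C) : ∀ᶠ y in 𝓝 x, Disjoint (F y) C := by
  simp only [Set.disjoint_right] at hxC ⊢
  exact hC.eventually_forall_of_forall_eventually (P := fun y w => w ∉ F y) fun w hw =>
    hF.isOpen_compl.mem_nhds (hxC hw)

theorem hasClosedCGraph_of_upperHemicontinuous [RegularSpace β] (hF : UpperHemicontinuous F)
    (hclosed : ∀ x, IsClosed (F x)) : HasClosedCGraph F :=
  isClosed_iff_frequently.2 fun p hp =>
    UpperHemicontinuousAt.mem_of_tendsto (hF p.1) (hclosed p.1) continuousAt_fst hp continuousAt_snd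

end ClosedGraph

section Net

/-- Convergence of a net `xs`, indexed by the relation `le`, to `x`. -/
def NetTendsto {ι α : Type} [TopologicalSpace α] (le : ι → ι → Prop) (xs : ι → α) (x : α) : Prop :=
  ∀ U ∈ 𝓝 x, ∃ i, ∀ j, le i j → xs j ∈ U

theorem dirIdx_filter_sets {α : Type} (f : Filter α) :
    DirIdx fun s t : f.sets => (t : Set α) ⊆ s :=
  ⟨⟨⟨Set.univ, univ_mem⟩⟩, fun _ => Set.Subset.rfl, fun _ _ _ hst htu => htu.trans hst,
    fun s t => ⟨⟨s ∩ t, inter_mem s.2 t.2⟩, Set.inter_subset_left, Set.inter_subset_right⟩⟩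

variable {α β : Type} [TopologicalSpace α] [TopologicalSpace β] {F : α → Set β}

theorem HasClosedCGraph.netLimsup_subset (hF : HasClosedCGraph F) {ι : Type} {le : ι → ι → Prop}
    {xs : ι → α} {x : α} (hx : NetTendsto le xs x) : NetLimsup le (fun i => F (xs i)) ⊆ F x := by
  intro y hy
  suffices hxy : (x, y) ∈ closure {p : α × β | p.2 ∈ F p.1} from hF.closure_subset hxy
  refine mem_closure_iff_nhds.2 fun N hN => ?_
  obtain ⟨U, hU, W, hW, hUW⟩ := mem_nhds_prod_iff.1 hN
  obtain ⟨i, hi⟩ := hx U hU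
  obtain ⟨j, hij, z, hzW, hz⟩ := hy W hW i
  exact ⟨(xs j, z), hUW ⟨hi j hij, hzW⟩, hz⟩

theorem hasClosedCGraph_of_netLimsup_subset
    (hF : ∀ (ι : Type) (le : ι → ι → Prop) (xs : ι → α) (x : α), DirIdx le → NetTendsto le xs x →
      NetLimsup le (fun i => F (xs i)) ⊆ F x) : HasClosedCGraph F := by
  refine isClosed_of_closure_subset fun ⟨x, y⟩ hxy => ?_
  choose p hpN hpF using fun N : (𝓝 (x, y)).sets => mem_closure_iff_nhds.1 hxy N N.2
  refine hF _ _ (fun N => (p N).1) x (dirIdx_filter_sets _) ?_ ?_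
  · intro U hU
    exact ⟨⟨_, continuousAt_fst hU⟩, fun N hN => hN (hpN N)⟩
  · intro W hW M
    have hMW : (M : Set (α × β)) ∩ Prod.snd ⁻¹' W ∈ 𝓝 (x, y) := inter_mem M.2 (continuousAt_snd hW)
    exact ⟨⟨_, hMW⟩, Set.inter_subset_left, _, (hpN ⟨_, hMW⟩).2, hpF _⟩

theorem subset_netLimsup_of_lowerHemicontinuousAt {ι : Type} {le : ι → ι → Prop} {xs : ι → α}
    {x : α} (hF : LowerHemicontinuousAt F x) (hle : DirIdx le) (hx : NetTendsto le xs x) :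
    F x ⊆ NetLimsup le (fun i => F (xs i)) := by
  intro y hy W hW i
  obtain ⟨O, hOW, hO, hyO⟩ := mem_nhds_iff.1 hW
  obtain ⟨k, hk⟩ := hx _ (lowerHemicontinuousAt_iff.1 hF O hO ⟨y, hy, hyO⟩)
  obtain ⟨j, hij, hkj⟩ := hle.2.2.2 i k
  obtain ⟨z, hz, hzO⟩ := hk j hkj
  exact ⟨j, hij, z, hOW hzO, hz⟩

theorem forall_netLimsup_eq_iff_hasClosedCGraph (hF : LowerHemicontinuous F) :
    (∀ (ι : Type) (le : ι → ι → Prop) (xs : ι → α) (x : α), DirIdx le → NetTendsto le xs x →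
        NetLimsup le (fun i => F (xs i)) = F x) ↔ HasClosedCGraph F :=
  ⟨fun h => hasClosedCGraph_of_netLimsup_subset fun ι le xs x hle hx => (h ι le xs x hle hx).subset,
    fun hgraph _ _ _ x hle hx => (hgraph.netLimsup_subset hx).antisymm
      (subset_netLimsup_of_lowerHemicontinuousAt (hF x) hle hx)⟩

end Net

section Orbit

variable {G X : Type*} [Monoid G] [MulAction G X]

theorem orbit_subset_of_smul_inter_orbit_subset {Γ : Set G} (hΓ : Submonoid.closure Γ = ⊤)
    {A : Set X} {y : X} (hyA : y ∈ A) (hstep : Γ • A ∩ MulAction.orbit G y ⊆ A) :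
    MulAction.orbit G y ⊆ A := by
  rintro _ ⟨g, rfl⟩
  induction hΓ ▸ Submonoid.mem_top g using Submonoid.closure_induction_left with
  | one => simpa only [one_smul] using hyA
  | mul_left a ha b _ hb =>
    refine hstep ⟨?_, MulAction.mem_orbit y (a * b)⟩
    simpa only [mul_smul] using Set.smul_mem_smul ha hb

variable [TopologicalSpace X]

theorem lowerHemicontinuous_closure_orbit [ContinuousConstSMul G X] :
    LowerHemicontinuous fun x : X => closure (MulAction.orbit G x) := by
  refine fun x => lowerHemicontinuousAt_iff.2 fun U hU hxU => ?_
  obtain ⟨_, ⟨g, rfl⟩, hgU⟩ := (closure_inter_open_nonempty_iff hU).1 hxU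
  filter_upwards [(continuous_const_smul g).continuousAt (hU.mem_nhds hgU)] with y hy
  exact ⟨g • y, subset_closure (MulAction.mem_orbit y g), hy⟩

variable [TopologicalSpace G] [ContinuousSMul G X] [LocallyCompactSpace X] [RegularSpace X]

theorem HasClosedCGraph.upperHemicontinuous_closure_orbit
    (hgraph : HasClosedCGraph fun x : X => closure (MulAction.orbit G x))
    (hcompact : ∀ x : X, IsCompact (closure (MulAction.orbit G x)))
    {Γ : Set G} (hΓc : IsCompact Γ) (hΓ : Submonoid.closure Γ = ⊤) :
    UpperHemicontinuous fun x : X => closure (MulAction.orbit G x) := by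
  refine upperHemicontinuous_iff_forall_isOpen.2 fun x U hU hxU => ?_
  obtain ⟨L, hLc, hLclosed, hxL, hLU⟩ := exists_compact_closed_between (hcompact x) hU hxU
  have hshell : IsCompact (Γ • L \ interior L) := (hΓc.smul_set hLc).diff isOpen_interior
  have hxshell : Disjoint (closure (MulAction.orbit G x)) (Γ • L \ interior L) :=
    Set.disjoint_sdiff_right.mono_left hxL
  have hxmem : x ∈ interior L := hxL (subset_closure (MulAction.mem_orbit_self x))
  filter_upwards [hgraph.eventually_disjoint hshell hxshell, isOpen_interior.mem_nhds hxmem]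
    with y hyshell hyL
  have hstep : Γ • interior L ∩ MulAction.orbit G y ⊆ interior L := fun z ⟨hzΓ, hz⟩ =>
    by_contra fun hzL => hyshell.notMem_of_mem_left (subset_closure hz)
      ⟨Set.smul_subset_smul_left interior_subset hzΓ, hzL⟩
  have horbit := orbit_subset_of_smul_inter_orbit_subset hΓ hyL hstep
  exact (closure_minimal (horbit.trans interior_subset) hLclosed).trans hLU

theorem hasClosedCGraph_closure_orbit_iff_upperHemicontinuous
    (hcompact : ∀ x : X, IsCompact (closure (MulAction.orbit G x)))
    {Γ : Set G} (hΓc : IsCompact Γ) (hΓ : Submonoid.closure Γ = ⊤) :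
    (HasClosedCGraph fun x : X => closure (MulAction.orbit G x)) ↔
      UpperHemicontinuous fun x : X => closure (MulAction.orbit G x) :=
  ⟨fun hgraph => hgraph.upperHemicontinuous_closure_orbit hcompact hΓc hΓ,
    fun husc => hasClosedCGraph_of_upperHemicontinuous husc fun _ => isClosed_closure⟩

end Orbit

theorem submonoid_closure_eq_top_of_forall_mem_pow {M : Type*} [Monoid M] {s : Set M}
    (hs : ∀ g, ∃ n : ℕ, g ∈ s ^ n) : Submonoid.closure s = ⊤ :=
  (Submonoid.eq_top_iff' _).2 fun g =>
    let ⟨_, hg⟩ := hs g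
    Submonoid.pow_subset Submonoid.subset_closure hg

theorem statement2_general {G : Type*} {X : Type} [Monoid G] [TopologicalSpace G]
    [TopologicalSpace X] [RegularSpace X] [LocallyCompactSpace X]
    [MulAction G X] [ContinuousSMul G X]
    (hLag : ∀ x : X, IsCompact (closure (MulAction.orbit G x)))
    {Γ : Set G} (hΓc : IsCompact Γ) (hΓ : Submonoid.closure Γ = ⊤) :
    (∀ (ι : Type) (le : ι → ι → Prop) (xs : ι → X) (x : X), DirIdx le → NetTendsto le xs x →
        NetLimsup le (fun i => closure (MulAction.orbit G (xs i)))
          = closure (MulAction.orbit G x)) ↔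
      (∀ (x : X) (U : Set X), IsOpen U → closure (MulAction.orbit G x) ⊆ U →
        ∃ V ∈ 𝓝 x, ∀ y ∈ V, closure (MulAction.orbit G y) ⊆ U) := by
  rw [forall_netLimsup_eq_iff_hasClosedCGraph lowerHemicontinuous_closure_orbit,
    hasClosedCGraph_closure_orbit_iff_upperHemicontinuous hLag hΓc hΓ,
    upperHemicontinuous_iff_forall_isOpen]
  simp only [eventually_iff_exists_mem]

/-- for a flow with compactly generated phase group, the orbit closure
mapping is ⌜continuous⌝ iff it is upper semicontinuous. -/
theorem statement2 {G X : Type} [Group G] [TopologicalSpace G] [T2Space G]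
    [ContinuousMul G] [UniformSpace X] [T2Space X] [LocallyCompactSpace X]
    [MulAction G X] [ContinuousSMul G X]
    (hLag : ∀ x : X, IsCompact (closure (MulAction.orbit G x)))
    (Γ : Set G) (hΓc : IsCompact Γ) (hΓ1 : (1 : G) ∈ Γ) (hΓinv : Γ⁻¹ = Γ)
    (hΓgen : ∀ g : G, ∃ r : ℕ, 1 ≤ r ∧ g ∈ Γ ^ r) :
    (∀ (ι : Type) (le : ι → ι → Prop) (xs : ι → X) (x : X),
        DirIdx le → (∀ U ∈ 𝓝 x, ∃ i, ∀ j, le i j → xs j ∈ U) →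
        NetLimsup le (fun i => closure (MulAction.orbit G (xs i)))
          = closure (MulAction.orbit G x)) ↔
      (∀ (x : X) (U : Set X), IsOpen U → closure (MulAction.orbit G x) ⊆ U →
        ∃ V ∈ 𝓝 x, ∀ y ∈ V, closure (MulAction.orbit G y) ⊆ U) :=
  statement2_general hLag hΓc <| submonoid_closure_eq_top_of_forall_mem_pow fun g =>
    (hΓgen g).imp fun _ => And.right
end

section
/- Let G be a para-topological group that is compactly generated, acting jointly continuously on a Hausdorff uniform space X (not necessarily locally compact) such that closure(G•x) is compact and 0-dimensional for every x ∈ X. If the action is distal, then every point of X is regularly almost periodic with respect to the discrete topology on G: for every x ∈ X and every neighborhood U of x there is a normal subgroup H of G of finite index (equivalently, a discretely syndetic normal subgroup) with H•x ⊆ U. -/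
open Pointwise Filter Topology

/-- A subset of a topological space is 0-dimensional if, as a subspace, it has a
neighborhood base of clopen sets at every point. -/
def ZeroDimSubset {X : Type} [TopologicalSpace X] (A : Set X) : Prop :=
  ∀ a : A, ∀ U ∈ 𝓝 a, ∃ V : Set A, IsClopen V ∧ a ∈ V ∧ V ⊆ U

/-!
By Ellis's theorem, the enveloping semigroup of a distal action on a compact Hausdorff space `Y`
is a group, so all orbit closures in `Y × Y` are minimal. Let `P ⊆ Y × Y` be clopen and
`Pₖ` the clopen set of points which stay in `P` under all elements of `Γ ^ k`. If a point `u ∉ P`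
could be brought into `Pₖ` for every `k`, then its orbit closure would meet `⋂ₖ Pₖ`, hence contain
an orbit closure lying inside `P`, against minimality. By compactness of `Pᶜ` and `Γ ^ (k + 1)`,
there is one `k` such that no element of `Γ ^ (k + 1)` brings a point outside `P` into `Pₖ`; since
`Γ` is symmetric, this says `Pₖ ⊆ Pₖ₊₁`, so `Pₖ` is invariant. The largest invariant subset of `P`
is therefore open.

For `V` clopen in `Y` and `P` the set of pairs not separated by `V`, this makes
`y ↦ {g | g • y ∈ V}` locally constant. It takes finitely many values, so `V` has finitely many
translates, and the normal core of its stabilizer has finite index. The theorem is the case where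
`Y` is an orbit closure.
-/

section Ellis

section SMul

variable {M Y : Type*} [TopologicalSpace Y] [SMul M Y]

variable (M Y) in
/-- An action is distal if the orbit closure of a pair of distinct points never meets the
diagonal. -/
def IsDistalAction : Prop :=
  ∀ ⦃x y : Y⦄, x ≠ y → Disjoint (closure (MulAction.orbit M (x, y))) (Set.diagonal Y)

variable (M) in
/-- The orbit closure of `u` is minimal: it is the orbit closure of each of its points. This is
encoded as the recurrence of `u` in the orbit closure of each such point. -/
def HasMinimalOrbitClosure (u : Y) : Prop :=
  ∀ z ∈ closure (MulAction.orbit M u), u ∈ closure (MulAction.orbit M z)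

variable (M Y) in
/-- The Ellis (enveloping) semigroup: the closure of the set of translations in `Y → Y`, for the
topology of pointwise convergence. -/
def ellisSemigroup : Set (Y → Y) :=
  closure (Set.range fun (g : M) (y : Y) => g • y)

theorem image_ellisSemigroup_prod [T2Space Y] [CompactSpace Y] (u : Y × Y) :
    (fun p : Y → Y => (p u.1, p u.2)) '' ellisSemigroup M Y = closure (MulAction.orbit M u) := by
  rw [ellisSemigroup, image_closure_of_isCompact isClosed_closure.isCompact (by fun_prop),
    ← Set.range_comp]
  rfl

end SMul

variable {M Y : Type*} [Monoid M] [TopologicalSpace Y] [MulAction M Y]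

theorem comp_mem_ellisSemigroup [ContinuousConstSMul M Y] {p q : Y → Y}
    (hp : p ∈ ellisSemigroup M Y) (hq : q ∈ ellisSemigroup M Y) :
    p ∘ q ∈ ellisSemigroup M Y := by
  have smul_comp_mem (g : M) : (fun y => g • q y) ∈ ellisSemigroup M Y := by
    refine map_mem_closure (f := fun r : Y → Y => fun y => g • r y) (by fun_prop) hq ?_
    rintro _ ⟨g', rfl⟩
    exact ⟨g * g', funext fun y => mul_smul g g' y⟩
  have comp_right_mem : p ∘ q ∈ closure (ellisSemigroup M Y) := by
    refine map_mem_closure (f := fun r : Y → Y => r ∘ q)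
      (continuous_pi fun y => continuous_apply (q y)) hp ?_
    rintro _ ⟨g, rfl⟩
    exact smul_comp_mem g
  rwa [ellisSemigroup, closure_closure] at comp_right_mem

theorem exists_comp_idempotent_mem_ellisSemigroup [ContinuousConstSMul M Y] [T2Space Y]
    [CompactSpace Y] {p : Y → Y} (hp : p ∈ ellisSemigroup M Y) :
    ∃ q ∈ ellisSemigroup M Y, ∀ y, q (p (q (p y))) = q (p y) := by
  let : Semigroup (Y → Y) := inferInstanceAs (Semigroup (Function.End Y))
  have continuous_mul_right (r : Y → Y) : Continuous fun q : Y → Y => q * r :=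
    continuous_pi fun y => continuous_apply (r y)
  have isCompact_leftIdeal : IsCompact ((· * p) '' ellisSemigroup M Y) :=
    isClosed_closure.isCompact.image (continuous_mul_right p)
  obtain ⟨_, ⟨q, hq, rfl⟩, hidem⟩ := exists_idempotent_in_compact_subsemigroup
    continuous_mul_right ((· * p) '' ellisSemigroup M Y) ⟨_, p, hp, rfl⟩ isCompact_leftIdeal (by
      rintro _ ⟨a, ha, rfl⟩ _ ⟨b, hb, rfl⟩
      exact ⟨(a ∘ p) ∘ b, comp_mem_ellisSemigroup (comp_mem_ellisSemigroup ha hp) hb, rfl⟩)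
  exact ⟨q, hq, congrFun hidem⟩

theorem IsDistalAction.exists_leftInverse_mem_ellisSemigroup [ContinuousConstSMul M Y] [T2Space Y]
    [CompactSpace Y] (hdistal : IsDistalAction M Y) {p : Y → Y} (hp : p ∈ ellisSemigroup M Y) :
    ∃ q ∈ ellisSemigroup M Y, Function.LeftInverse q p := by
  obtain ⟨q, hq, hidem⟩ := exists_comp_idempotent_mem_ellisSemigroup hp
  refine ⟨q, hq, fun y => ?_⟩
  by_contra hne
  -- The idempotent `q ∘ p` maps the pair `(q (p y), y)` into the diagonal.
  have mem_orbit_closure : (q (p (q (p y))), q (p y)) ∈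
      closure (MulAction.orbit M (q (p y), y)) := by
    rw [← image_ellisSemigroup_prod]
    exact ⟨q ∘ p, comp_mem_ellisSemigroup hq hp, rfl⟩
  exact Set.disjoint_left.1 (hdistal hne) mem_orbit_closure (hidem y)

theorem IsDistalAction.hasMinimalOrbitClosure_prod [ContinuousConstSMul M Y] [T2Space Y]
    [CompactSpace Y] (hdistal : IsDistalAction M Y) (u : Y × Y) : HasMinimalOrbitClosure M u := by
  intro z hz
  rw [← image_ellisSemigroup_prod] at hz ⊢
  obtain ⟨p, hp, rfl⟩ := hz
  obtain ⟨q, hq, hqp⟩ := hdistal.exists_leftInverse_mem_ellisSemigroup hp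
  exact ⟨q, hq, Prod.ext (hqp u.1) (hqp u.2)⟩

end Ellis

section StayingSet

/-- The set `⋂ g ∈ K, (g • ·) ⁻¹' P` of points which stay in `P` under all elements of `K`. For
the action of a monoid and `K = Set.univ`, it is the largest invariant subset of `P`. -/
def stayingSet {M W : Type*} [SMul M W] (K : Set M) (P : Set W) : Set W :=
  {w | ∀ g ∈ K, g • w ∈ P}

section SMul

variable {M W : Type*} [SMul M W] {K L : Set M} {P Q : Set W}

theorem mem_stayingSet {w : W} : w ∈ stayingSet K P ↔ ∀ g ∈ K, g • w ∈ P :=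
  Iff.rfl

theorem stayingSet_mono (h : P ⊆ Q) : stayingSet K P ⊆ stayingSet K Q :=
  fun _ hw g hg => h (hw g hg)

theorem stayingSet_anti (h : K ⊆ L) : stayingSet L P ⊆ stayingSet K P :=
  fun _ hw g hg => hw g (h hg)

theorem stayingSet_iUnion {ι : Sort*} (K : ι → Set M) :
    stayingSet (⋃ i, K i) P = ⋂ i, stayingSet (K i) P := by
  ext w
  simp only [mem_stayingSet, Set.mem_iUnion, Set.mem_iInter, forall_exists_index]
  exact forall_comm

variable [TopologicalSpace W]

theorem isClosed_stayingSet [ContinuousConstSMul M W] (hP : IsClosed P) :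
    IsClosed (stayingSet K P) := by
  simp only [stayingSet, Set.ofPred_forall]
  exact isClosed_biInter fun g _ => hP.preimage (continuous_const_smul g)

theorem isOpen_stayingSet [TopologicalSpace M] [ContinuousSMul M W] (hK : IsCompact K)
    (hP : IsOpen P) : IsOpen (stayingSet K P) := by
  refine isOpen_iff_mem_nhds.2 fun w hw =>
    hK.eventually_forall_of_forall_eventually fun g hg => ?_
  exact (continuous_snd.smul continuous_fst).continuousAt.eventually (hP.mem_nhds (hw g hg))

end SMul

section Monoid

variable {M W : Type*} [Monoid M] [MulAction M W] {K L Γ : Set M} {P Q : Set W}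

theorem stayingSet_subset (h : 1 ∈ K) : stayingSet K P ⊆ P :=
  fun w hw => one_smul M w ▸ hw 1 h

theorem stayingSet_mul : stayingSet (K * L) P = stayingSet L (stayingSet K P) := by
  ext w
  simp only [mem_stayingSet, ← Set.image2_mul, Set.forall_mem_image2, mul_smul]
  exact forall₂_comm

theorem subset_stayingSet_pow (h : Q ⊆ stayingSet Γ Q) (n : ℕ) : Q ⊆ stayingSet (Γ ^ n) Q := by
  induction n with
  | zero => simp [stayingSet]
  | succ n ih =>
    rw [pow_succ, stayingSet_mul]
    exact h.trans (stayingSet_mono ih)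

theorem isCompact_pow [TopologicalSpace M] [ContinuousMul M] (hΓ : IsCompact Γ) (n : ℕ) :
    IsCompact (Γ ^ n) := by
  induction n with
  | zero => exact pow_zero Γ ▸ isCompact_singleton
  | succ n ih => exact pow_succ Γ n ▸ ih.mul hΓ

theorem HasMinimalOrbitClosure.exists_disjoint_stayingSet_pow [TopologicalSpace W]
    [ContinuousConstSMul M W] {u : W} (hmin : HasMinimalOrbitClosure M u)
    (hcompact : IsCompact (closure (MulAction.orbit M u)))
    (hΓone : 1 ∈ Γ) (hΓgen : ⋃ n : ℕ, Γ ^ n = Set.univ) (hP : IsClosed P) (hu : u ∉ P) :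
    ∃ k : ℕ, Disjoint (closure (MulAction.orbit M u)) (stayingSet (Γ ^ k) P) := by
  have antitone_stayingSet_pow : Antitone fun k : ℕ => stayingSet (Γ ^ k) P :=
    fun _ _ hkl => stayingSet_anti (Set.pow_subset_pow_right hΓone hkl)
  simp only [Set.disjoint_iff_inter_eq_empty]
  refine hcompact.elim_directed_family_closed _ (fun _ => isClosed_stayingSet hP) ?_
    antitone_stayingSet_pow.directed_ge
  rw [← stayingSet_iUnion, hΓgen, Set.eq_empty_iff_forall_notMem]
  rintro z ⟨hzu, hzP⟩
  have orbit_subset : MulAction.orbit M z ⊆ P := Set.range_subset_iff.2 fun g => hzP g trivial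
  exact hu (closure_minimal orbit_subset hP (hmin z hzu))

end Monoid

section Group

variable {G W : Type*} [Group G] [TopologicalSpace G] [ContinuousMul G] [TopologicalSpace W]
  [CompactSpace W] [MulAction G W] [ContinuousSMul G W] {Γ : Set G} {P : Set W}

theorem exists_compl_subset_stayingSet_compl (hΓ : IsCompact Γ) (hΓone : 1 ∈ Γ) (hΓinv : Γ⁻¹ = Γ)
    (hΓgen : ⋃ n : ℕ, Γ ^ n = Set.univ) (hmin : ∀ u : W, HasMinimalOrbitClosure G u)
    (hP : IsClopen P) :
    ∃ k : ℕ, Pᶜ ⊆ stayingSet (Γ ^ (k + 1)) (stayingSet (Γ ^ k) P)ᶜ := by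
  refine hP.compl.isClosed.isCompact.elim_directed_cover _
    (fun k => isOpen_stayingSet (isCompact_pow hΓ _) (isClosed_stayingSet hP.1).isOpen_compl)
    (fun u hu => ?_) (Monotone.directed_le (monotone_nat_of_le_succ fun k u hu => ?_))
  · obtain ⟨k, hk⟩ := (hmin u).exists_disjoint_stayingSet_pow isClosed_closure.isCompact
      hΓone hΓgen hP.1 hu
    exact Set.mem_iUnion.2
      ⟨k, fun a _ => Set.disjoint_left.1 hk (subset_closure (MulAction.mem_orbit u a))⟩
  · rw [pow_succ' Γ (k + 1), stayingSet_mul]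
    intro b hb γ hγ hstay
    rw [pow_succ, stayingSet_mul] at hstay
    have inv_mem : γ⁻¹ ∈ Γ := hΓinv ▸ Set.inv_mem_inv.2 hγ
    exact hu b hb (inv_smul_smul γ (b • u) ▸ hstay γ⁻¹ inv_mem)

theorem exists_stayingSet_pow_eq_stayingSet_univ (hΓ : IsCompact Γ) (hΓone : 1 ∈ Γ)
    (hΓinv : Γ⁻¹ = Γ) (hΓgen : ⋃ n : ℕ, Γ ^ n = Set.univ)
    (hmin : ∀ u : W, HasMinimalOrbitClosure G u) (hP : IsClopen P) :
    ∃ k : ℕ, stayingSet (Γ ^ k) P = stayingSet (Set.univ : Set G) P := by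
  obtain ⟨k, hk⟩ := exists_compl_subset_stayingSet_compl hΓ hΓone hΓinv hΓgen hmin hP
  have pow_subset_pow_succ : stayingSet (Γ ^ k) P ⊆ stayingSet (Γ ^ (k + 1)) P := by
    intro w hw g hg
    by_contra hgw
    have inv_mem : g⁻¹ ∈ Γ ^ (k + 1) := by
      rwa [← Set.mem_inv, ← inv_pow, hΓinv]
    exact hk hgw g⁻¹ inv_mem ((inv_smul_smul g w).symm ▸ hw)
  have invariant (n : ℕ) :
      stayingSet (Γ ^ k) P ⊆ stayingSet (Γ ^ n) (stayingSet (Γ ^ k) P) := by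
    rw [pow_succ, stayingSet_mul] at pow_subset_pow_succ
    exact subset_stayingSet_pow pow_subset_pow_succ n
  refine ⟨k, Set.Subset.antisymm ?_ (stayingSet_anti (Set.subset_univ _))⟩
  rw [← hΓgen, stayingSet_iUnion]
  exact Set.subset_iInter fun n =>
    (invariant n).trans (stayingSet_mono (stayingSet_subset (Set.one_mem_pow hΓone)))

theorem isOpen_stayingSet_univ (hΓ : IsCompact Γ) (hΓone : 1 ∈ Γ) (hΓinv : Γ⁻¹ = Γ)
    (hΓgen : ⋃ n : ℕ, Γ ^ n = Set.univ) (hmin : ∀ u : W, HasMinimalOrbitClosure G u)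
    (hP : IsClopen P) : IsOpen (stayingSet (Set.univ : Set G) P) := by
  obtain ⟨k, hk⟩ := exists_stayingSet_pow_eq_stayingSet_univ hΓ hΓone hΓinv hΓgen hmin hP
  exact hk ▸ isOpen_stayingSet (isCompact_pow hΓ k) hP.2

end Group

end StayingSet

section VisitTimes

/-- The set, often written `N(y, V)`, of elements of `M` which bring `y` into `V`. -/
def visitTimes (M : Type*) {Y : Type*} [SMul M Y] (V : Set Y) (y : Y) : Set M :=
  {g | g • y ∈ V}

variable {G Y : Type*} [Group G] [TopologicalSpace Y] [CompactSpace Y] [MulAction G Y] {V : Set Y}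

theorem finiteIndex_stabilizer_of_isLocallyConstant_visitTimes
    (h : IsLocallyConstant (visitTimes G V)) : (MulAction.stabilizer G V).FiniteIndex := by
  have orbit_subset : MulAction.orbit G V ⊆
      (visitTimes G V ⁻¹' ·) '' 𝒫 (Set.range (visitTimes G V)) := by
    rintro _ ⟨g, rfl⟩
    refine ⟨{S | g⁻¹ ∈ S} ∩ Set.range (visitTimes G V), Set.inter_subset_right, ?_⟩
    ext y
    simp [visitTimes, Set.mem_smul_set_iff_inv_smul_mem]
  have orbit_finite : (MulAction.orbit G V).Finite :=
    (h.range_finite.finite_subsets.image _).subset orbit_subset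
  rw [Subgroup.finiteIndex_iff, MulAction.index_stabilizer]
  exact ((Set.ncard_pos orbit_finite).2 (MulAction.nonempty_orbit V)).ne'

theorem IsDistalAction.isLocallyConstant_visitTimes [T2Space Y] [TopologicalSpace G]
    [ContinuousMul G] [ContinuousSMul G Y] (hdistal : IsDistalAction G Y) {Γ : Set G}
    (hΓ : IsCompact Γ) (hΓone : 1 ∈ Γ) (hΓinv : Γ⁻¹ = Γ) (hΓgen : ⋃ n : ℕ, Γ ^ n = Set.univ)
    (hV : IsClopen V) : IsLocallyConstant (visitTimes G V) := by
  have isClopen_notSeparated : IsClopen {w : Y × Y | w.1 ∈ V ↔ w.2 ∈ V} := by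
    have h := ((hV.preimage continuous_fst).himp (hV.preimage continuous_snd)).inter
      ((hV.preimage continuous_snd).himp (hV.preimage continuous_fst))
    convert h using 1
    ext w
    simp [himp_eq, iff_iff_implies_and_implies, imp_iff_or_not]
  have isOpen_sameTimes := isOpen_stayingSet_univ hΓ hΓone hΓinv hΓgen
    hdistal.hasMinimalOrbitClosure_prod isClopen_notSeparated
  refine (IsLocallyConstant.iff_eventually_eq _).2 fun z => ?_
  have never_separated : ∀ᶠ y in 𝓝 z,
      (y, z) ∈ stayingSet (Set.univ : Set G) {w : Y × Y | w.1 ∈ V ↔ w.2 ∈ V} :=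
    (isOpen_sameTimes.preimage (Continuous.prodMk_left z)).mem_nhds fun _ _ => Iff.rfl
  exact never_separated.mono fun y hy => Set.ext fun g => hy g trivial

end VisitTimes

section OrbitClosure

theorem IsDistalAction.subMulAction {M X : Type*} [TopologicalSpace X] [SMul M X]
    (hdistal : IsDistalAction M X) (Y : SubMulAction M X) : IsDistalAction M Y := by
  intro a b hab
  refine Set.disjoint_left.2 fun c hc hdiag => ?_
  have mem_orbit_closure :
      ((c.1 : X), (c.2 : X)) ∈ closure (MulAction.orbit M ((a : X), (b : X))) := by
    refine map_mem_closure (f := fun w : Y × Y => ((w.1 : X), (w.2 : X))) (by fun_prop) hc ?_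
    rintro _ ⟨g, rfl⟩
    exact ⟨g, rfl⟩
  exact Set.disjoint_left.1 (hdistal (Subtype.coe_ne_coe.2 hab)) mem_orbit_closure
    (congrArg Subtype.val hdiag)

/-- The orbit closure of `x` as a subaction, so that it carries its own action of `M`. -/
def orbitClosure (M : Type*) {X : Type*} [Monoid M] [TopologicalSpace X] [MulAction M X]
    [ContinuousConstSMul M X] (x : X) : SubMulAction M X where
  carrier := closure (MulAction.orbit M x)
  smul_mem' g _ hy := smul_closure_orbit_subset g x (Set.smul_mem_smul_set hy)

end OrbitClosure

theorem statement6_general {G : Type*} {X : Type} [Group G] [TopologicalSpace G] [ContinuousMul G]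
    [TopologicalSpace X] [T2Space X] [MulAction G X] [ContinuousSMul G X] {Γ : Set G}
    (hΓ : IsCompact Γ) (hΓone : 1 ∈ Γ) (hΓinv : Γ⁻¹ = Γ) (hΓgen : ⋃ n : ℕ, Γ ^ n = Set.univ)
    {x : X} (hcompact : IsCompact (closure (MulAction.orbit G x)))
    (h0dim : ZeroDimSubset (closure (MulAction.orbit G x)))
    (hdistal : IsDistalAction G (orbitClosure G x)) {U : Set X} (hU : U ∈ 𝓝 x) :
    ∃ H : Subgroup G, H.Normal ∧ H.FiniteIndex ∧ ∀ h ∈ H, h • x ∈ U := by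
  have : CompactSpace (orbitClosure G x) := isCompact_iff_compactSpace.1 hcompact
  let x₀ : orbitClosure G x := ⟨x, subset_closure (MulAction.mem_orbit_self x)⟩
  obtain ⟨V, hV, hxV, hVU⟩ :
      ∃ V : Set (orbitClosure G x), IsClopen V ∧ x₀ ∈ V ∧ V ⊆ Subtype.val ⁻¹' U :=
    h0dim x₀ _ (continuous_subtype_val.continuousAt.preimage_mem_nhds hU)
  have : (MulAction.stabilizer G V).FiniteIndex :=
    finiteIndex_stabilizer_of_isLocallyConstant_visitTimes
      (hdistal.isLocallyConstant_visitTimes hΓ hΓone hΓinv hΓgen hV)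
  refine ⟨(MulAction.stabilizer G V).normalCore, inferInstance, inferInstance, fun h hh => ?_⟩
  have smul_V : h • V = V := Subgroup.normalCore_le _ hh
  have smul_mem_V : h • x₀ ∈ V := smul_V ▸ Set.smul_mem_smul_set hxV
  exact hVU smul_mem_V

/-- if a compactly generated para-topological group acts jointly
continuously and distally on a Hausdorff uniform space whose orbit closures are all
compact and 0-dimensional, then every point is regularly almost periodic with
respect to the discrete topology on `G`: every neighborhood of `x` contains `H • x`
for some finite-index normal subgroup `H` of `G`. -/
theorem statement6 {G X : Type} [Group G] [TopologicalSpace G] [T2Space G]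
    [ContinuousMul G] [UniformSpace X] [T2Space X]
    [MulAction G X] [ContinuousSMul G X]
    (Γ : Set G) (hΓc : IsCompact Γ) (hΓ1 : (1 : G) ∈ Γ) (hΓinv : Γ⁻¹ = Γ)
    (hΓgen : ∀ g : G, ∃ r : ℕ, 1 ≤ r ∧ g ∈ Γ ^ r)
    (hLag : ∀ x : X, IsCompact (closure (MulAction.orbit G x)))
    (h0dim : ∀ x : X, ZeroDimSubset (closure (MulAction.orbit G x)))
    (hdistal : ∀ x y : X, x ≠ y →
      closure (Set.range fun g : G => (g • x, g • y)) ∩ Set.diagonal X = ∅) :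
    ∀ x : X, ∀ U ∈ 𝓝 x, ∃ H : Subgroup G, H.Normal ∧ H.FiniteIndex ∧
      ∀ h ∈ H, h • x ∈ U := by
  have iUnion_pow : ⋃ n : ℕ, Γ ^ n = Set.univ :=
    Set.iUnion_eq_univ_iff.2 fun g => (hΓgen g).imp fun _ => And.right
  have isDistalAction : IsDistalAction G X :=
    fun x y hxy => Set.disjoint_iff_inter_eq_empty.2 (hdistal x y hxy)
  exact fun x _ hU => statement6_general hΓc hΓ1 hΓinv iUnion_pow (hLag x) (h0dim x)
    (isDistalAction.subMulAction _) hU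
end

section
/- Let X be a compact Hausdorff 0-dimensional space and f : X → X a pointwise periodic homeomorphism, i.e. for every x ∈ X there is an integer p ≥ 1 with f^p x = x. Then the ℤ-flow generated by f is regularly almost periodic: for every entourage ε of X there is an integer m ≥ 1 such that (f^{mk}x, x) ∈ ε for all k ∈ ℤ and all x ∈ X. -/
open Filter Topology Uniformity

/-- The `n`-th iterate (`n : ℤ`) of a homeomorphism. -/
noncomputable def hpow {X : Type} [TopologicalSpace X] (f : X ≃ₜ X) (n : ℤ) : X → X :=
  (f.toEquiv ^ n : Equiv.Perm X)

/-!
A partition of `X` into finitely many clopen sets finer than a given entourage is coded by a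
locally constant map `g`. If the codes of `f^[n] x` and `f^[n] y` agree for all `n ≥ 1`, those of
`x` and `y` agree as well: take for `n` a common period. By compactness of `X × X`, the times
`1, …, N` suffice for all `x` and `y` at once, so the word of length `N` read along the orbit of
`f x` determines the one read along the orbit of `x`. As there are finitely many words, this
backward map on words is a permutation of some finite order `P`, and `f ^ P` preserves every cell
of the partition.
-/

section Symbolic

variable {X α : Type*}

/-- The itinerary of length `N` of a point `x` under `f`: the sequence of the values of the coding
map `g` at `x, f x, …, f^[N - 1] x`. -/
def itinerary (f : X → X) (g : X → α) (N : ℕ) (x : X) : Fin N → α :=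
  fun i => g (f^[i] x)

variable {f : X → X} {g : X → α}

lemma itinerary_eq_iff {N : ℕ} {x y : X} :
    itinerary f g N x = itinerary f g N y ↔ ∀ i < N, g (f^[i] x) = g (f^[i] y) := by
  simp only [itinerary, funext_iff, Fin.forall_iff]

lemma itinerary_eq_of_itinerary_apply_eq {N : ℕ} {x y : X} (h₀ : g x = g y)
    (h : itinerary f g N (f x) = itinerary f g N (f y)) :
    itinerary f g N x = itinerary f g N y := by
  rw [itinerary_eq_iff] at h ⊢
  rintro (_ | i) hi
  · exact h₀
  · exact h i (Nat.lt_of_succ_lt hi)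

lemma apply_eq_of_forall_iterate_succ_eq {x y : X} (hx : x ∈ Function.periodicPts f)
    (hy : y ∈ Function.periodicPts f) (h : ∀ n, g (f^[n + 1] x) = g (f^[n + 1] y)) :
    g x = g y := by
  obtain ⟨p, hp, hpx⟩ := hx
  obtain ⟨q, hq, hqy⟩ := hy
  have hpq := h (p * q - 1)
  rwa [Nat.sub_add_cancel (Nat.mul_pos hp hq), hpx.mul_const q, hqy.const_mul p] at hpq

lemma exists_comp_iterate_eq_of_factorsThrough [Finite α] (hg : g.Surjective)
    (h : g.FactorsThrough (g ∘ f)) : ∃ P > 0, g ∘ f^[P] = g := by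
  have := Fintype.ofFinite α
  obtain ⟨φ, hφ⟩ : ∃ φ : α → α, ∀ x, φ (g (f x)) = g x :=
    ⟨Function.extend (g ∘ f) g id, h.extend_apply id⟩
  have φ_injective : φ.Injective :=
    Finite.injective_iff_surjective.2 fun a => (hg a).imp' (g ∘ f) fun x hx => (hφ x).trans hx
  have φ_iterate (n : ℕ) (x : X) : φ^[n] (g (f^[n] x)) = g x := by
    induction n with
    | zero => rfl
    | succ n ih => rw [Function.iterate_succ_apply' f, Function.iterate_succ_apply φ, hφ, ih]
  refine ⟨(Fintype.card α).factorial, Nat.factorial_pos _, funext fun x => ?_⟩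
  have hper := Function.isPeriodicPt_factorial_card_of_mem_periodicPts
    (φ_injective.mem_periodicPts (g (f^[(Fintype.card α).factorial] x)))
  exact hper.symm.trans (φ_iterate _ x)

lemma comp_zpow_eq {σ : Equiv.Perm X} (h : g ∘ σ = g) (k : ℤ) : g ∘ ⇑(σ ^ k) = g := by
  have h_inv : g ∘ ⇑σ⁻¹ = g := (σ.comp_symm_eq g g).2 h.symm
  induction k using Int.induction_on with
  | zero => rfl
  | succ n ih => rw [zpow_add_one, Equiv.Perm.coe_mul, ← Function.comp_assoc, ih, h]
  | pred n ih => rw [zpow_sub_one, Equiv.Perm.coe_mul, ← Function.comp_assoc, ih, h_inv]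

end Symbolic

section ClopenCoding

variable {X α : Type*} [TopologicalSpace X] {f : X → X} {g : X → α}

lemma isLocallyConstant_pi {ι : Type*} [Finite ι] {β : ι → Type*} {h : ∀ i, X → β i}
    (hh : ∀ i, IsLocallyConstant (h i)) : IsLocallyConstant fun x i => h i x :=
  (IsLocallyConstant.iff_eventually_eq _).2 fun x =>
    (eventually_all.2 fun i => (hh i).eventually_eq x).mono fun _ => funext

lemma isLocallyConstant_itinerary (hf : Continuous f) (hg : IsLocallyConstant g) (N : ℕ) :
    IsLocallyConstant (itinerary f g N) :=
  isLocallyConstant_pi fun i => hg.comp_continuous (hf.iterate i)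

lemma isClopen_setOf_apply_fst_eq_apply_snd (hg : IsLocallyConstant g) :
    IsClopen {z : X × X | g z.1 = g z.2} := by
  have hpair : IsLocallyConstant fun z : X × X => (g z.1, g z.2) :=
    (hg.comp_continuous continuous_fst).prodMk (hg.comp_continuous continuous_snd)
  exact ⟨isOpen_compl_iff.1 (hpair (Set.diagonal α)ᶜ), hpair (Set.diagonal α)⟩

variable [CompactSpace X]

lemma exists_forall_apply_eq_of_itinerary_eq (hf : Continuous f) (hg : IsLocallyConstant g)
    (h : ∀ x y, (∀ n, g (f^[n + 1] x) = g (f^[n + 1] y)) → g x = g y) :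
    ∃ N, ∀ x y, itinerary f g N (f x) = itinerary f g N (f y) → g x = g y := by
  let separated (N : ℕ) : Set (X × X) :=
    {z | itinerary f g N (f z.1) = itinerary f g N (f z.2)}ᶜ
  have separated_open (N : ℕ) : IsOpen (separated N) :=
    (isClopen_setOf_apply_fst_eq_apply_snd
      ((isLocallyConstant_itinerary hf hg N).comp_continuous hf)).compl.isOpen
  have separated_mono : Monotone separated := fun M N hMN z hz hN =>
    hz (itinerary_eq_iff.2 fun i hi => itinerary_eq_iff.1 hN i (hi.trans_le hMN))
  have separated_cover : {z : X × X | g z.1 = g z.2}ᶜ ⊆ ⋃ N, separated N := by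
    intro z hz
    by_contra hsep
    simp only [Set.mem_iUnion, not_exists, separated, Set.notMem_compl_iff] at hsep
    exact hz (h _ _ fun n => itinerary_eq_iff.1 (hsep (n + 1)) n n.lt_succ_self)
  obtain ⟨N, hN⟩ := (isClopen_setOf_apply_fst_eq_apply_snd hg).compl.isClosed.isCompact
    |>.elim_directed_cover separated separated_open separated_cover separated_mono.directed_le
  exact ⟨N, fun x y hxy => by_contra fun hne => hN (a := (x, y)) hne hxy⟩

lemma exists_comp_iterate_eq (hf : Continuous f) (hg : IsLocallyConstant g)
    (hper : ∀ x, x ∈ Function.periodicPts f) : ∃ P > 0, g ∘ f^[P] = g := by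
  obtain ⟨N, hN⟩ := exists_forall_apply_eq_of_itinerary_eq hf hg fun x y =>
    apply_eq_of_forall_iterate_succ_eq (hper x) (hper y)
  let word : X → Set.range (itinerary f g N) := Set.rangeFactorization _
  have : Finite (Set.range (itinerary f g N)) :=
    (isLocallyConstant_itinerary hf hg N).range_finite
  have word_factors : word.FactorsThrough (word ∘ f) := fun x y hxy =>
    have hxy' := congrArg Subtype.val hxy
    Subtype.ext (itinerary_eq_of_itinerary_apply_eq (hN x y hxy') hxy')
  obtain ⟨P, hP, hword⟩ :=
    exists_comp_iterate_eq_of_factorsThrough Set.rangeFactorization_surjective word_factors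
  refine ⟨P, hP, funext fun x => hN _ _ ?_⟩
  rw [← Function.iterate_succ_apply' f, Function.iterate_succ_apply]
  exact congrArg Subtype.val (congrFun hword (f x))

end ClopenCoding

lemma exists_discreteQuotient_forall_mem_entourage {X : Type*} [UniformSpace X] [CompactSpace X]
    (h0dim : ∀ x : X, ∀ U ∈ 𝓝 x, ∃ V : Set X, IsClopen V ∧ x ∈ V ∧ V ⊆ U)
    {ε : Set (X × X)} (hε : ε ∈ 𝓤 X) :
    ∃ S : DiscreteQuotient X, ∀ x y, S.proj x = S.proj y → (x, y) ∈ ε := by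
  obtain ⟨t, ht, ht_symm, htε⟩ := comp_symm_mem_uniformity_sets hε
  choose V hV hxV hVt using fun x : X => h0dim x _ (UniformSpace.ball_mem_nhds x ht)
  obtain ⟨s, hs⟩ := isCompact_univ.elim_finite_subcover V (fun x => (hV x).isOpen)
    fun x _ => Set.mem_iUnion.2 ⟨x, hxV x⟩
  refine ⟨s.inf fun v => .ofIsClopen (hV v), fun x y hxy => ?_⟩
  obtain ⟨v, hv, hxv⟩ := Set.mem_iUnion₂.1 (hs (Set.mem_univ x))
  have hyv : y ∈ V v :=
    (Finset.inf_le (f := fun v => DiscreteQuotient.ofIsClopen (hV v)) hv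
      (Quotient.exact hxy)).1 hxv
  exact htε ⟨v, ht_symm.symm _ _ (hVt v hxv), hVt v hyv⟩

theorem statement9_general {X : Type*} [UniformSpace X] [CompactSpace X]
    (h0dim : ∀ x : X, ∀ U ∈ 𝓝 x, ∃ V : Set X, IsClopen V ∧ x ∈ V ∧ V ⊆ U)
    (f : Equiv.Perm X) (hf : Continuous f) (hper : ∀ x, x ∈ Function.periodicPts f) :
    ∀ ε ∈ 𝓤 X, ∃ m : ℤ, 1 ≤ m ∧ ∀ (k : ℤ) (x : X), ((f ^ (m * k)) x, x) ∈ ε := by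
  intro ε hε
  obtain ⟨S, hS⟩ := exists_discreteQuotient_forall_mem_entourage h0dim hε
  obtain ⟨P, hP, hSP⟩ := exists_comp_iterate_eq hf S.proj_isLocallyConstant hper
  refine ⟨P, mod_cast hP, fun k x => hS _ _ ?_⟩
  rw [← Equiv.Perm.coe_pow] at hSP
  rw [zpow_mul, zpow_natCast]
  exact congrFun (comp_zpow_eq hSP k) x

lemma hpow_natCast {X : Type} [TopologicalSpace X] (f : X ≃ₜ X) (n : ℕ) :
    hpow f (n : ℤ) = f^[n] := by
  rw [hpow, zpow_natCast, Equiv.Perm.coe_pow, Homeomorph.coe_toEquiv]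

/-- a pointwise periodic homeomorphism of a compact Hausdorff
0-dimensional space generates a regularly almost periodic ℤ-flow. -/
theorem statement9 {X : Type} [UniformSpace X] [CompactSpace X] [T2Space X]
    (h0dim : ∀ x : X, ∀ U ∈ 𝓝 x, ∃ V : Set X, IsClopen V ∧ x ∈ V ∧ V ⊆ U)
    (f : X ≃ₜ X)
    (hpp : ∀ x : X, ∃ p : ℕ, 1 ≤ p ∧ hpow f (p : ℤ) x = x) :
    ∀ ε ∈ 𝓤 X, ∃ m : ℤ, 1 ≤ m ∧ ∀ (k : ℤ) (x : X), (hpow f (m * k) x, x) ∈ ε :=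
  statement9_general h0dim f.toEquiv f.continuous fun x =>
    (hpp x).imp fun p hp => ⟨hp.1, (congrFun (hpow_natCast f p) x).symm.trans hp.2⟩
end

section
/- Let X be a locally compact Hausdorff uniform space and f : X → X a homeomorphism such that the closure of {fⁿx | n ∈ ℤ} is compact for every x ∈ X, and let x ∈ X. Then the following are pairwise equivalent: (1) x is Poisson stable: x is a cluster point of (fⁿx) both as n → +∞ and as n → −∞; (2) for every nonempty subsemigroup S of (ℤ,+) and every neighborhood U of x there is s ∈ S with f^s x ∈ U; (3) for every nonempty discretely thick subsemigroup S of (ℤ,+) and every neighborhood U of x there is s ∈ S with f^s x ∈ U. -/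
/-!
If `x` is recurrent along two sets of times, then it is recurrent along their sum. Given an additive
map from a semigroup of times along which `x` is recurrent to a finite group, the pigeonhole
principle makes `x` recurrent along the fiber over some `r`; adding this fiber to itself as often as
the order of `r` makes `x` recurrent along the fiber over `0`. Applied to `ℤ → ZMod |a|`, this gives
return times of a Poisson stable point, of either sign, among the multiples of `a`, and a
subsemigroup containing `a` contains all its positive multiples. Conversely, the rays `Ici n` with
`0 ≤ n` and `Iic n` with `n ≤ 0` are discretely thick subsemigroups, and they generate the filters
`atTop` and `atBot`.
-/

open Filter Topology

open scoped Pointwise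

/-- The point `x` is recurrent along the set of times `S`: every neighborhood of `x` is visited by
`s +ᵥ x` for some `s ∈ S`. -/
def RecurrentAlong {M X : Type*} [VAdd M X] [TopologicalSpace X] (S : Set M) (x : X) : Prop :=
  ∀ U ∈ 𝓝 x, ∃ s ∈ S, s +ᵥ x ∈ U

/-- The set `S` is discretely thick: for every finite set `K`, it contains a translate `K + t` with
`t ∈ S`. -/
def IsDiscretelyThick {M : Type*} [Add M] (S : Set M) : Prop :=
  ∀ K : Finset M, ∃ t ∈ S, ∀ k ∈ K, k + t ∈ S

theorem nsmul_mem_of_pos {M : Type*} [AddMonoid M] {S : AddSubsemigroup M} {a : M} {n : ℕ}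
    (hn : 0 < n) (ha : a ∈ S) : n • a ∈ S := by
  induction n, hn using Nat.le_induction with
  | base => simpa only [one_nsmul] using ha
  | succ n _ ih => simpa only [succ_nsmul] using S.add_mem ih ha

namespace RecurrentAlong

section VAdd

variable {M X : Type*} [VAdd M X] [TopologicalSpace X] {S T : Set M} {x : X}

theorem mono (h : RecurrentAlong S x) (hST : S ⊆ T) : RecurrentAlong T x := fun U hU =>
  let ⟨s, hs, hsU⟩ := h U hU
  ⟨s, hST hs, hsU⟩

theorem iff_mem_closure : RecurrentAlong S x ↔ x ∈ closure ((· +ᵥ x) '' S) := by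
  simp only [RecurrentAlong, mem_closure_iff_nhds, Set.inter_comm _ (_ '' S), Set.Nonempty,
    Set.mem_inter_iff, Set.exists_mem_image]

theorem exists_fiber {κ : Type*} [Finite κ] (h : RecurrentAlong S x) (φ : M → κ) :
    ∃ r, RecurrentAlong {s ∈ S | φ s = r} x := by
  have hS : S = ⋃ r, {s ∈ S | φ s = r} := by
    ext s
    simp
  rw [iff_mem_closure, hS, Set.image_iUnion, closure_iUnion_of_finite, Set.mem_iUnion] at h
  simpa only [iff_mem_closure] using h

end VAdd

section AddSemigroupAction

variable {M X : Type*} [AddSemigroup M] [AddSemigroupAction M X] [TopologicalSpace X]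
  [ContinuousConstVAdd M X] {x : X}

theorem add {S T : Set M} (hS : RecurrentAlong S x) (hT : RecurrentAlong T x) :
    RecurrentAlong (S + T) x := by
  intro U hU
  obtain ⟨s, hs, hsU⟩ := hS (interior U) (interior_mem_nhds.2 hU)
  have hU' : (s +ᵥ ·) ⁻¹' U ∈ 𝓝 x :=
    (continuous_const_vadd s).continuousAt.preimage_mem_nhds (mem_interior_iff_mem_nhds.1 hsU)
  obtain ⟨t, ht, htU⟩ := hT _ hU'
  exact ⟨s + t, Set.add_mem_add hs ht, by rwa [add_vadd]⟩

theorem inter_ker {K : Type*} [AddGroup K] [Finite K] {S : AddSubsemigroup M}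
    (h : RecurrentAlong (S : Set M) x) (φ : M →ₙ+ K) : RecurrentAlong {s ∈ S | φ s = 0} x := by
  obtain ⟨r, hr⟩ := h.exists_fiber φ
  let R : AddSubsemigroup K :=
    { carrier := {r | RecurrentAlong {s ∈ S | φ s = r} x}
      add_mem' := by
        intro r₁ r₂ h₁ h₂
        refine (h₁.add h₂).mono ?_
        rintro _ ⟨s, ⟨hs, hsr⟩, t, ⟨ht, htr⟩, rfl⟩
        exact ⟨S.add_mem hs ht, by rw [map_add, hsr, htr]⟩ }
  have hR : addOrderOf r • r ∈ R := nsmul_mem_of_pos (addOrderOf_pos r) hr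
  rwa [addOrderOf_nsmul_eq_zero] at hR

end AddSemigroupAction

end RecurrentAlong

theorem mapClusterPt_vadd_iff_recurrentAlong {M X : Type*} [VAdd M X] [TopologicalSpace X] {x : X}
    {l : Filter M} : MapClusterPt x l (· +ᵥ x) ↔ ∀ S ∈ l, RecurrentAlong S x := by
  simp only [mapClusterPt_iff_frequently, frequently_iff, RecurrentAlong]
  exact ⟨fun h S hS U hU => h U hU hS, fun h U hU S hS => h S hS U hU⟩

section DiscretelyThick

variable {G : Type*} [AddCommGroup G] [PartialOrder G] [IsOrderedAddMonoid G]

theorem isDiscretelyThick_of_mem_atTop [IsDirectedOrder G] {S : Set G} (hS : S ∈ atTop) :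
    IsDiscretelyThick S := fun K =>
  (Eventually.and hS <| K.eventually_all.2 fun k _ =>
    tendsto_atTop_add_const_left _ k tendsto_id hS).exists

theorem isDiscretelyThick_of_mem_atBot [IsCodirectedOrder G] {S : Set G} (hS : S ∈ atBot) :
    IsDiscretelyThick S := fun K =>
  (Eventually.and hS <| K.eventually_all.2 fun k _ =>
    tendsto_atBot_add_const_left _ k tendsto_id hS).exists

end DiscretelyThick

section IntAction

variable {X : Type*} [TopologicalSpace X] [AddAction ℤ X] [ContinuousConstVAdd ℤ X] {x : X}

theorem RecurrentAlong.inter_dvd {S : AddSubsemigroup ℤ} (h : RecurrentAlong (S : Set ℤ) x) {a : ℤ}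
    (ha : a ≠ 0) : RecurrentAlong {n ∈ S | a ∣ n} x := by
  have : NeZero a.natAbs := ⟨Int.natAbs_ne_zero.2 ha⟩
  simpa [ZMod.intCast_zmod_eq_zero_iff_dvd] using
    h.inter_ker (Int.castAddHom (ZMod a.natAbs) : ℤ →ₙ+ ZMod a.natAbs)

theorem recurrentAlong_addSubsemigroup_of_mapClusterPt
    (hTop : MapClusterPt x atTop fun n : ℤ => n +ᵥ x)
    (hBot : MapClusterPt x atBot fun n : ℤ => n +ᵥ x) {S : AddSubsemigroup ℤ}
    (hS : (S : Set ℤ).Nonempty) : RecurrentAlong (S : Set ℤ) x := by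
  obtain ⟨a, ha⟩ := hS
  rcases eq_or_ne a 0 with rfl | ha0
  · exact fun U hU => ⟨0, ha, by simpa only [zero_vadd] using mem_of_mem_nhds hU⟩
  -- Depending on the sign of `a`, this is `Ioi 0` or `Iio 0`.
  let P : AddSubsemigroup ℤ :=
    { carrier := {n | 0 < a * n}
      add_mem' := fun {m n} hm hn => by
        simpa only [Set.mem_ofPred_eq, mul_add] using add_pos hm hn }
  have hP : RecurrentAlong (P : Set ℤ) x := by
    rcases ha0.lt_or_gt with hneg | hpos
    · exact mapClusterPt_vadd_iff_recurrentAlong.1 hBot _ <|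
        (eventually_lt_atBot 0).mono fun _ hn => mul_pos_of_neg_of_neg hneg hn
    · exact mapClusterPt_vadd_iff_recurrentAlong.1 hTop _ <|
        (eventually_gt_atTop 0).mono fun _ hn => mul_pos hpos hn
  refine (hP.inter_dvd ha0).mono ?_
  rintro _ ⟨hm, m, rfl⟩
  have hm0 : 0 < m := by
    replace hm : 0 < a * (a * m) := hm
    rw [← mul_assoc] at hm
    exact pos_of_mul_pos_right hm (mul_self_nonneg a)
  lift m to ℕ using hm0.le
  rw [mul_comm, ← nsmul_eq_mul]
  exact nsmul_mem_of_pos (Int.natCast_pos.1 hm0) ha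

theorem statement11_general {X : Type*} [TopologicalSpace X] [AddAction ℤ X]
    [ContinuousConstVAdd ℤ X] (x : X) :
    List.TFAE
      [ (MapClusterPt x atTop (fun n : ℤ => n +ᵥ x) ∧ MapClusterPt x atBot fun n : ℤ => n +ᵥ x),
        (∀ S : Set ℤ, S.Nonempty → (∀ a ∈ S, ∀ b ∈ S, a + b ∈ S) → RecurrentAlong S x),
        (∀ S : Set ℤ, S.Nonempty → (∀ a ∈ S, ∀ b ∈ S, a + b ∈ S) → IsDiscretelyThick S →
          RecurrentAlong S x) ] := by
  tfae_have 1 → 2 := fun ⟨hTop, hBot⟩ S hS hadd =>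
    recurrentAlong_addSubsemigroup_of_mapClusterPt hTop hBot
      (S := ⟨S, fun ha hb => hadd _ ha _ hb⟩) hS
  tfae_have 2 → 3 := fun h S hS hadd _ => h S hS hadd
  tfae_have 3 → 1 := by
    simp only [mapClusterPt_vadd_iff_recurrentAlong]
    refine fun h => ⟨fun S hS => ?_, fun S hS => ?_⟩
    · obtain ⟨n, hn, hnS⟩ := (atTop_basis' 0).mem_iff.1 hS
      exact (h (Set.Ici n) Set.nonempty_Ici
        (fun _ ha _ hb => le_add_of_le_of_nonneg ha (hn.trans hb))
        (isDiscretelyThick_of_mem_atTop (Ici_mem_atTop n))).mono hnS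
    · obtain ⟨n, hn, hnS⟩ := (atBot_basis' 0).mem_iff.1 hS
      exact (h (Set.Iic n) Set.nonempty_Iic
        (fun _ ha _ hb => add_le_of_le_of_nonpos ha (le_trans hb hn))
        (isDiscretelyThick_of_mem_atBot (Iic_mem_atBot n))).mono hnS
  tfae_finish

end IntAction

theorem hpow_eq_coe_zpow {X : Type} [TopologicalSpace X] (f : X ≃ₜ X) (n : ℤ) :
    hpow f n = ⇑(f ^ n) := by
  let toPerm : (X ≃ₜ X) →* Equiv.Perm X :=
    { toFun := Homeomorph.toEquiv, map_one' := rfl, map_mul' := fun _ _ => rfl }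
  exact congrArg DFunLike.coe (map_zpow toPerm f n).symm

/-- The action of `ℤ` on `X` generated by a homeomorphism `f`, with `n +ᵥ x = hpow f n x`. It is
not an instance because it depends on `f`. -/
noncomputable abbrev hpowAddAction {X : Type} [TopologicalSpace X] (f : X ≃ₜ X) :
    AddAction ℤ X where
  vadd := hpow f
  zero_vadd _ := rfl
  add_vadd m n x := congrArg (· x) (zpow_add f.toEquiv m n)

theorem continuousConstVAdd_hpowAddAction {X : Type} [TopologicalSpace X] (f : X ≃ₜ X) :
    letI := hpowAddAction f
    ContinuousConstVAdd ℤ X :=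
  letI := hpowAddAction f
  ⟨fun n => (hpow_eq_coe_zpow f n ▸ (f ^ n).continuous : Continuous (hpow f n))⟩

/-- for a homeomorphism of a locally compact Hausdorff uniform space
with compact orbit closures, Poisson stability of `x` is equivalent to hitting every
neighborhood of `x` along every nonempty subsemigroup of `ℤ`, and to hitting it
along every nonempty discretely thick subsemigroup of `ℤ`. -/
theorem statement11 {X : Type} [UniformSpace X] [T2Space X] [LocallyCompactSpace X]
    (f : X ≃ₜ X)
    (hLag : ∀ x : X, IsCompact (closure (Set.range fun n : ℤ => hpow f n x)))
    (x : X) :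
    List.TFAE
      [ (MapClusterPt x atTop (fun n : ℤ => hpow f n x) ∧
          MapClusterPt x atBot fun n : ℤ => hpow f n x),
        (∀ S : Set ℤ, S.Nonempty → (∀ a ∈ S, ∀ b ∈ S, a + b ∈ S) →
          ∀ U ∈ 𝓝 x, ∃ s ∈ S, hpow f s x ∈ U),
        (∀ S : Set ℤ, S.Nonempty → (∀ a ∈ S, ∀ b ∈ S, a + b ∈ S) →
          (∀ K : Finset ℤ, ∃ t ∈ S, ∀ k ∈ K, k + t ∈ S) →
          ∀ U ∈ 𝓝 x, ∃ s ∈ S, hpow f s x ∈ U) ] := by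
  let := hpowAddAction f
  have := continuousConstVAdd_hpowAddAction f
  exact statement11_general x
end
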